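/- Let X be a finite rack with rack rank N. Then the subgroups C_n^{ND}(X) of N-degenerate chains form a subcomplex of the rack chain complex: ∂_n(C_n^{ND}(X)) ⊆ C_{n−1}^{ND}(X) for all n. -/

import Mathlib

/-- A rack: a set with operations `act` (x ▷ y) and `inv` (x ▷⁻¹ y) satisfying
(i) (x ▷ y) ▷⁻¹ y = x = (x ▷⁻¹ y) ▷ y and (ii) right self-distributivity. -/
class Rack' (X : Type*) where
  act : X → X → X
  inv : X → X → X
  act_inv : ∀ x y : X, inv (act x y) y = x
  inv_act : ∀ x y : X, act (inv x y) y = x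
  distrib : ∀ x y z : X, act (act x y) z = act (act x z) (act y z)

open Rack'
/-- The kink map π(x) = x ▷ x. -/
def Rack'.kink {X : Type*} [Rack' X] (x : X) : X := Rack'.act x x

/-- Rack powers: x^{▷1} = x ▷ x and x^{▷(k+1)} = x^{▷k} ▷ x^{▷k}
(with x^{▷0} = x as a convenient base case). -/
def Rack'.rpow {X : Type*} [Rack' X] (x : X) : ℕ → X
  | 0 => x
  | k + 1 => Rack'.act (Rack'.rpow x k) (Rack'.rpow x k)
/-- The i-th face of an (n+1)-tuple: delete the entry at position i. -/
def face {X : Type*} {n : ℕ} (i : Fin (n + 1)) (x : Fin (n + 1) → X) : Fin n → X :=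
  fun j => x (i.succAbove j)

/-- The twisted i-th face: delete the entry at position i and act by x_i on all
earlier entries. -/
def tface {X : Type*} [Rack' X] {n : ℕ} (i : Fin (n + 1)) (x : Fin (n + 1) → X) :
    Fin n → X :=
  fun j => if ((i.succAbove j : Fin (n + 1)) : ℕ) < (i : ℕ)
    then Rack'.act (x (i.succAbove j)) (x i) else x (i.succAbove j)

/-- The rack homology boundary map ∂ : C_{n+1}^R(X) → C_n^R(X), where
C_m^R(X) is the free abelian group on m-tuples of elements of X; on a
generator (x₁,…,x_m) it is Σ_{i=2}^m (−1)^i [(x₁,…,x̂_i,…,x_m) −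
(x₁▷x_i,…,x_{i−1}▷x_i,x_{i+1},…,x_m)] (here indices are 0-based, so the
1-based index i corresponds to (i:ℕ)+1). -/
def bdry {X : Type*} [Rack' X] (n : ℕ) :
    FreeAbelianGroup (Fin (n + 1) → X) →+ FreeAbelianGroup (Fin n → X) :=
  FreeAbelianGroup.lift fun x =>
    ∑ i : Fin (n + 1), if (i : ℕ) = 0 then 0 else
      ((-1 : ℤ) ^ ((i : ℕ) + 1)) •
        (FreeAbelianGroup.of (face i x) - FreeAbelianGroup.of (tface i x))

/-- The subgroup of N-degenerate n-chains: generated by the chains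
Σ_{k=1}^N (x₁,…,x_{i−1}, x_i^{▷k}, x_i^{▷(k+1)}, x_{i+2},…,x_n),
where x^{▷k} = π^k(x) for the kink map π. -/
def NDsub (X : Type*) [Rack' X] (N n : ℕ) :
    AddSubgroup (FreeAbelianGroup (Fin n → X)) :=
  AddSubgroup.closure
    { c | ∃ (z : Fin n → X) (i : Fin n) (h : (i : ℕ) + 1 < n),
        c = ∑ k ∈ Finset.Icc 1 N, FreeAbelianGroup.of
          (fun j => if j = i then (Rack'.kink (X := X))^[k] (z i)
            else if j = ⟨(i : ℕ) + 1, h⟩ then (Rack'.kink (X := X))^[k + 1] (z i)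
            else z j) }

/-!
Let `D k i` double the entry `y i` of a tuple `y` and apply `π^k` and `π^(k+1)` to the two copies.
Since `π x ▷ y = π (x ▷ y)` and `x ▷ π y = x ▷ y`, this twisted degeneracy satisfies the simplicial
identities with both families of faces: deleting an entry other than the doubled ones turns
`D k i` into another `D k`, so after summing over `k` these faces contribute degenerate chains.
The faces at the two doubled entries carry opposite signs and cancel: the twisted ones agree for
each `k`, while the plain ones have `π^(k+1) (y i)` and `π^k (y i)` at position `i`, which become
equal after summing over the full period `N`.
-/

section FinIndices

variable {n : ℕ}

theorem val_succAbove (l : Fin (n + 1)) (j : Fin n) :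
    (l.succAbove j : ℕ) = if (j : ℕ) < l then (j : ℕ) else j + 1 := by
  simp only [Fin.succAbove, Fin.lt_def, Fin.val_castSucc, apply_ite Fin.val, Fin.val_succ]

theorem val_predAbove (i : Fin n) (j : Fin (n + 1)) :
    (i.predAbove j : ℕ) = if (i : ℕ) < j then (j : ℕ) - 1 else j := by
  simp only [Fin.predAbove, Fin.lt_def, Fin.val_castSucc, apply_dite Fin.val, Fin.val_pred,
    Fin.coe_castPred, dite_eq_ite]

/- Deleting entry `l'` after doubling entry `i'` amounts to doubling entry `i` after deleting entry
`l`. Every `l'` other than `i'.castSucc` and `i'.succ` is `i'.castSucc.succAbove l` for some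
`l ≠ i'`, and then `i' = l.succAbove i`, so the hypotheses `hi` and `hl` treat `l' < i'` and
`l' > i' + 1` at once. -/
variable {l i' : Fin (n + 1)} {i : Fin n} {l' : Fin (n + 2)}

theorem predAbove_succAbove_comm (hi : l.succAbove i = i') (hl : i'.castSucc.succAbove l = l')
    (j : Fin (n + 1)) : i'.predAbove (l'.succAbove j) = l.succAbove (i.predAbove j) := by
  simp only [Fin.ext_iff, val_succAbove, val_predAbove, Fin.val_castSucc] at hi hl ⊢
  lia

theorem succAbove_eq_castSucc_iff (hi : l.succAbove i = i')
    (hl : i'.castSucc.succAbove l = l') (j : Fin (n + 1)) :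
    l'.succAbove j = i'.castSucc ↔ j = i.castSucc := by
  simp only [Fin.ext_iff, val_succAbove, Fin.val_castSucc] at hi hl ⊢
  lia

theorem succAbove_eq_succ_iff (hi : l.succAbove i = i')
    (hl : i'.castSucc.succAbove l = l') (j : Fin (n + 1)) :
    l'.succAbove j = i'.succ ↔ j = i.succ := by
  simp only [Fin.ext_iff, val_succAbove, Fin.val_castSucc, Fin.val_succ] at hi hl ⊢
  lia

theorem succAbove_lt_iff_succAbove_predAbove_lt (hi : l.succAbove i = i')
    (hl : i'.castSucc.succAbove l = l') (j : Fin (n + 1)) :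
    l'.succAbove j < l' ↔ l.succAbove (i.predAbove j) < l := by
  simp only [Fin.ext_iff, Fin.lt_def, val_succAbove, val_predAbove, Fin.val_castSucc]
    at hi hl ⊢
  lia

end FinIndices

theorem sum_Icc_one_succ_of_eq {M : Type*} [AddCommGroup M] {f : ℕ → M} {N : ℕ}
    (hf : f (N + 1) = f 1) :
    ∑ k ∈ Finset.Icc 1 N, f (k + 1) = ∑ k ∈ Finset.Icc 1 N, f k := by
  have h : ∑ k ∈ Finset.Icc 1 N, (f (k + 1) - f k) = f (N + 1) - f 1 := by
    rw [← Finset.Ico_add_one_right_eq_Icc]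
    exact Finset.sum_Ico_sub f (by lia)
  rwa [Finset.sum_sub_distrib, hf, sub_self, sub_eq_zero] at h

theorem iterate_univ_lcm_minimalPeriod {α : Type*} [Fintype α] (f : α → α) :
    f^[Finset.univ.lcm (Function.minimalPeriod f)] = id :=
  funext fun x => Function.isPeriodicPt_iff_minimalPeriod_dvd.2
    (Finset.dvd_lcm (Finset.mem_univ x))

namespace Rack'

variable {X : Type*} [Rack' X]

theorem act_kink (x y : X) : act x (kink y) = act x y := by
  simpa only [inv_act, kink] using (distrib (inv x y) y y).symm

theorem act_iterate_kink (x y : X) (k : ℕ) : act x (kink^[k] y) = act x y := by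
  induction k with
  | zero => rfl
  | succ k ih => rw [Function.iterate_succ_apply', act_kink, ih]

theorem act_iterate_kink_self (x : X) (k : ℕ) : act (kink^[k] x) x = kink^[k + 1] x := by
  rw [Function.iterate_succ_apply', kink, act_iterate_kink]

theorem iterate_kink_act (x y : X) (k : ℕ) : kink^[k] (act x y) = act (kink^[k] x) y :=
  have h : Function.Semiconj (act · y) kink kink := fun x => distrib x x y
  ((h.iterate_right k) x).symm

end Rack'

section Degenerate

variable {X : Type*} [Rack' X] {n : ℕ}

/-- The twisted degeneracy: double the entry `y i` of an `n`-tuple and replace its two copies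
by `π^k (y i)` and `π^(k+1) (y i)`. -/
def kinkDegen (k : ℕ) (i : Fin n) (y : Fin n → X) : Fin (n + 1) → X := fun j =>
  kink^[if j = i.castSucc then k else if j = i.succ then k + 1 else 0] (y (i.predAbove j))

/-- The generator of the `N`-degenerate `(n + 1)`-chains obtained by doubling the entry `y i`;
the tuple `y` omits the entry that the doubling overwrites. -/
def degenChain (N : ℕ) (i : Fin n) (y : Fin n → X) : FreeAbelianGroup (Fin (n + 1) → X) :=
  ∑ k ∈ Finset.Icc 1 N, FreeAbelianGroup.of (kinkDegen k i y)

theorem kinkDegen_apply_of_ne {i : Fin n} {j : Fin (n + 1)} (hc : j ≠ i.castSucc)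
    (hs : j ≠ i.succ) (k : ℕ) (y : Fin n → X) : kinkDegen k i y j = y (i.predAbove j) := by
  simp only [kinkDegen, hc, hs, if_false, Function.iterate_zero_apply]

theorem kinkDegen_castSucc (k : ℕ) (i : Fin n) (y : Fin n → X) :
    kinkDegen k i y i.castSucc = kink^[k] (y i) := by
  simp [kinkDegen]

theorem kinkDegen_succ (k : ℕ) (i : Fin n) (y : Fin n → X) :
    kinkDegen k i y i.succ = kink^[k + 1] (y i) := by
  simp [kinkDegen, Fin.ext_iff]

theorem kinkDegen_castSucc_succAbove {i j : Fin n} (h : j ≠ i) (k : ℕ) (y : Fin n → X) :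
    kinkDegen k i y (i.castSucc.succAbove j) = y j := by
  have hs : i.castSucc.succAbove j ≠ i.succ := by
    rwa [← Fin.succAbove_castSucc_self, Fin.succAbove_right_injective.ne_iff]
  rw [kinkDegen_apply_of_ne (Fin.succAbove_ne _ j) hs, Fin.predAbove_succAbove]

theorem kinkDegen_castSucc_of_lt {i j : Fin n} (h : j < i) (k : ℕ) (y : Fin n → X) :
    kinkDegen k i y j.castSucc = y j := by
  rw [← Fin.succAbove_castSucc_of_lt _ _ h, kinkDegen_castSucc_succAbove h.ne]

theorem kinkDegen_succ_of_lt {i j : Fin n} (h : i < j) (k : ℕ) (y : Fin n → X) :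
    kinkDegen k i y j.succ = y j := by
  rw [← Fin.succAbove_castSucc_of_le _ _ h.le, kinkDegen_castSucc_succAbove h.ne']

section Outer

variable {l i' : Fin (n + 1)} {i : Fin n} {l' : Fin (n + 2)}

theorem kinkDegen_succAbove (hi : l.succAbove i = i') (hl : i'.castSucc.succAbove l = l')
    (k : ℕ) (y : Fin (n + 1) → X) (j : Fin (n + 1)) :
    kinkDegen k i' y (l'.succAbove j) =
      kink^[if j = i.castSucc then k else if j = i.succ then k + 1 else 0]
        (y (l.succAbove (i.predAbove j))) := by
  simp only [kinkDegen, predAbove_succAbove_comm hi hl, succAbove_eq_castSucc_iff hi hl,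
    succAbove_eq_succ_iff hi hl]

theorem face_kinkDegen (hi : l.succAbove i = i') (hl : i'.castSucc.succAbove l = l')
    (k : ℕ) (y : Fin (n + 1) → X) :
    face l' (kinkDegen k i' y) = kinkDegen k i (face l y) :=
  funext fun j => kinkDegen_succAbove hi hl k y j

theorem tface_kinkDegen (hi : l.succAbove i = i') (hl : i'.castSucc.succAbove l = l')
    (k : ℕ) (y : Fin (n + 1) → X) :
    tface l' (kinkDegen k i' y) = kinkDegen k i (tface l y) := by
  have hy : kinkDegen k i' y l' = y l :=
    hl ▸ kinkDegen_castSucc_succAbove (hi ▸ Fin.ne_succAbove l i) k y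
  funext j
  simp only [tface, ← Fin.lt_def, hy, kinkDegen_succAbove hi hl,
    succAbove_lt_iff_succAbove_predAbove_lt hi hl, ← iterate_kink_act]
  exact (apply_ite _ _ _ _).symm

theorem map_face_degenChain (hi : l.succAbove i = i') (hl : i'.castSucc.succAbove l = l')
    (N : ℕ) (y : Fin (n + 1) → X) :
    FreeAbelianGroup.map (face l') (degenChain N i' y) = degenChain N i (face l y) := by
  simp only [degenChain, map_sum, FreeAbelianGroup.map_of_apply, face_kinkDegen hi hl]

theorem map_tface_degenChain (hi : l.succAbove i = i') (hl : i'.castSucc.succAbove l = l')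
    (N : ℕ) (y : Fin (n + 1) → X) :
    FreeAbelianGroup.map (tface l') (degenChain N i' y) = degenChain N i (tface l y) := by
  simp only [degenChain, map_sum, FreeAbelianGroup.map_of_apply, tface_kinkDegen hi hl]

end Outer

theorem face_castSucc_kinkDegen (k : ℕ) (i : Fin n) (y : Fin n → X) :
    face i.castSucc (kinkDegen k i y) = Function.update y i (kink^[k + 1] (y i)) := by
  funext j
  rcases eq_or_ne j i with rfl | h
  · rw [face, Fin.succAbove_castSucc_self, kinkDegen_succ, Function.update_self]
  · rw [face, kinkDegen_castSucc_succAbove h, Function.update_of_ne h]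

theorem face_succ_kinkDegen (k : ℕ) (i : Fin n) (y : Fin n → X) :
    face i.succ (kinkDegen k i y) = Function.update y i (kink^[k] (y i)) := by
  funext j
  rcases lt_trichotomy j i with h | rfl | h
  · simp [face, Fin.succAbove_succ_of_le _ _ h.le, kinkDegen_castSucc_of_lt h, h.ne]
  · simp [face, kinkDegen_castSucc]
  · simp [face, Fin.succAbove_succ_of_lt _ _ h, kinkDegen_succ_of_lt h, h.ne']

theorem tface_castSucc_kinkDegen (k : ℕ) (i : Fin n) (y : Fin n → X) :
    tface i.castSucc (kinkDegen k i y) = tface i.succ (kinkDegen k i y) := by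
  funext j
  simp only [tface, ← Fin.lt_def, Fin.succAbove_lt_iff_castSucc_lt, Fin.castSucc_lt_castSucc_iff,
    Fin.castSucc_lt_succ_iff, kinkDegen_castSucc, kinkDegen_succ, act_iterate_kink]
  rcases lt_trichotomy j i with h | rfl | h
  · simp [Fin.succAbove_castSucc_of_lt _ _ h, Fin.succAbove_succ_of_le _ _ h.le, h, h.le]
  · simp [kinkDegen_castSucc, kinkDegen_succ, act_iterate_kink_self, -Function.iterate_succ]
  · simp [Fin.succAbove_castSucc_of_le _ _ h.le, Fin.succAbove_succ_of_lt _ _ h, h.not_ge,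
      h.not_gt]

theorem map_face_castSucc_degenChain {N : ℕ} (hN : (kink : X → X)^[N] = id) (i : Fin n)
    (y : Fin n → X) :
    FreeAbelianGroup.map (face i.castSucc) (degenChain N i y) =
      FreeAbelianGroup.map (face i.succ) (degenChain N i y) := by
  simp only [degenChain, map_sum, FreeAbelianGroup.map_of_apply, face_castSucc_kinkDegen,
    face_succ_kinkDegen]
  refine sum_Icc_one_succ_of_eq
    (f := fun k => FreeAbelianGroup.of (Function.update y i (kink^[k] (y i)))) ?_
  rw [Function.iterate_succ', hN, Function.comp_id, Function.iterate_one]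

theorem map_tface_castSucc_degenChain (N : ℕ) (i : Fin n) (y : Fin n → X) :
    FreeAbelianGroup.map (tface i.castSucc) (degenChain N i y) =
      FreeAbelianGroup.map (tface i.succ) (degenChain N i y) := by
  simp only [degenChain, map_sum, FreeAbelianGroup.map_of_apply, tface_castSucc_kinkDegen]

theorem tface_zero (x : Fin (n + 1) → X) : tface 0 x = face 0 x := by
  simp [tface, face, funext_iff]

theorem bdry_eq_sum_map (n : ℕ) (c : FreeAbelianGroup (Fin (n + 1) → X)) :
    bdry n c = ∑ l : Fin (n + 1), (-1 : ℤ) ^ ((l : ℕ) + 1) •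
      (FreeAbelianGroup.map (face l) c - FreeAbelianGroup.map (tface l) c) := by
  suffices h : bdry n = ∑ l : Fin (n + 1), (-1 : ℤ) ^ ((l : ℕ) + 1) •
      (FreeAbelianGroup.map (face (X := X) l) - FreeAbelianGroup.map (tface l)) by
    simp only [h, AddMonoidHom.finsetSum_apply, AddMonoidHom.smul_apply, AddMonoidHom.sub_apply]
  ext x
  simp only [bdry, FreeAbelianGroup.lift_apply_of, AddMonoidHom.finsetSum_apply,
    AddMonoidHom.smul_apply, AddMonoidHom.sub_apply, FreeAbelianGroup.map_of_apply]
  refine Finset.sum_congr rfl fun l _ => ?_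
  split_ifs with h
  · obtain rfl : l = 0 := Fin.ext h
    rw [tface_zero, sub_self, smul_zero]
  · rfl

theorem bdry_degenChain {N : ℕ} (hN : (kink : X → X)^[N] = id) (i : Fin (n + 1))
    (y : Fin (n + 1) → X) :
    bdry (n + 1) (degenChain N i y) =
      ∑ r : Fin n, (-1 : ℤ) ^ ((i.castSucc.succAbove (i.succAbove r) : ℕ) + 1) •
        (degenChain N (r.predAbove i) (face (i.succAbove r) y) -
          degenChain N (r.predAbove i) (tface (i.succAbove r) y)) := by
  rw [bdry_eq_sum_map, Fin.sum_univ_succAbove _ i.castSucc, Fin.sum_univ_succAbove _ i,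
    Fin.succAbove_castSucc_self, map_face_castSucc_degenChain hN, map_tface_castSucc_degenChain,
    Fin.val_castSucc, Fin.val_succ, pow_succ _ ((i : ℕ) + 1), mul_neg_one, neg_smul,
    add_neg_cancel_left]
  simp only [map_face_degenChain (Fin.succAbove_succAbove_predAbove i _) rfl,
    map_tface_degenChain (Fin.succAbove_succAbove_predAbove i _) rfl]

theorem kinkDegen_face_succ (k : ℕ) (i : Fin n) (z : Fin (n + 1) → X) :
    kinkDegen k i (face i.succ z) = fun j =>
      if j = i.castSucc then kink^[k] (z i.castSucc)
        else if j = i.succ then kink^[k + 1] (z i.castSucc) else z j := by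
  funext j
  split_ifs with hc hs
  · rw [hc, kinkDegen_castSucc, face, Fin.succAbove_succ_self]
  · rw [hs, kinkDegen_succ, face, Fin.succAbove_succ_self]
  · rw [kinkDegen_apply_of_ne hc hs, face, Fin.succ_succAbove_predAbove hs]

theorem NDsub_succ_eq_closure (N n : ℕ) :
    NDsub X N (n + 1) =
      AddSubgroup.closure {c | ∃ (i : Fin n) (y : Fin n → X), degenChain N i y = c} := by
  rw [NDsub]
  congr 1
  ext c
  constructor
  · rintro ⟨z, i, h, rfl⟩
    obtain ⟨i, rfl⟩ : ∃ i' : Fin n, i'.castSucc = i := ⟨⟨i, by lia⟩, rfl⟩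
    refine ⟨i, face i.succ z, ?_⟩
    simp only [degenChain, kinkDegen_face_succ]
    rfl
  · rintro ⟨i, y, rfl⟩
    obtain ⟨z, rfl⟩ : ∃ z, face i.succ z = y :=
      ⟨kinkDegen 0 i y, (face_succ_kinkDegen 0 i y).trans (Function.update_eq_self i y)⟩
    refine ⟨z, i.castSucc, i.succ.isLt, ?_⟩
    simp only [degenChain, kinkDegen_face_succ]
    rfl

theorem degenChain_mem_NDsub (N : ℕ) (i : Fin n) (y : Fin n → X) :
    degenChain N i y ∈ NDsub X N (n + 1) := by
  rw [NDsub_succ_eq_closure]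
  exact AddSubgroup.subset_closure ⟨i, y, rfl⟩

end Degenerate

theorem bdry_ndsub_general {X : Type*} [Rack' X] {N : ℕ} (hN : (kink : X → X)^[N] = id)
    (n : ℕ) (c : FreeAbelianGroup (Fin (n + 1) → X)) (hc : c ∈ NDsub X N (n + 1)) :
    bdry n c ∈ NDsub X N n := by
  rw [NDsub_succ_eq_closure] at hc
  refine (AddSubgroup.closure_le ((NDsub X N n).comap (bdry n))).2 ?_ hc
  rintro _ ⟨i, y, rfl⟩
  cases n with
  | zero => exact i.elim0
  | succ n =>
    rw [SetLike.mem_coe, AddSubgroup.mem_comap, bdry_degenChain hN]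
    exact sum_mem fun r _ => zsmul_mem
      (sub_mem (degenChain_mem_NDsub _ _ _) (degenChain_mem_NDsub _ _ _)) _

/-- For a finite rack of rack rank N, the N-degenerate chains form a
subcomplex: the boundary of an N-degenerate chain is N-degenerate. -/
theorem bdry_ndsub {X : Type*} [Rack' X] [Fintype X] (N : ℕ)
    (hN : Finset.univ.lcm
      (fun x : X => Function.minimalPeriod (Rack'.kink (X := X)) x) = N)
    (n : ℕ) (c : FreeAbelianGroup (Fin (n + 1) → X)) (hc : c ∈ NDsub X N (n + 1)) :
    bdry n c ∈ NDsub X N n :=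
  bdry_ndsub_general (hN ▸ iterate_univ_lcm_minimalPeriod kink) n c hc
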